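/- Fix integers n ≥ 1, d ≥ 1 and natural numbers α_0,…,α_n. Let G = {a ∈ ℕ^{n+1} : |a| = d and d ∣ ⟨α,a⟩} and μ = #G. For an integer t ≥ 1 let B_t = {b ∈ ℕ^{n+1} : |b| = t·d and d ∣ ⟨α,b⟩}, and for b ∈ B_t let N(b) be the number of multisets of size t with elements in G whose (elementwise) sum equals b. Then N(b) ≥ 1 for every b ∈ B_t, and binom(μ + t − 1, t) − #B_t = Σ_{b ∈ B_t} (N(b) − 1). -/

import Mathlib

/-!
A multiset of `t` invariant vectors of degree `d` has its sum in `B_t`, so summing `N` over `B_t`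
counts every such multiset once, and stars and bars gives the binomial coefficient. For `N b ≥ 1`,
regard `b` as a sequence of `t * d` indices, carrying weights in `ℤ/d`. As long as `t ≥ 2`, it has
at least `2 * d - 1` terms, so by the Erdős–Ginzburg–Ziv theorem `d` of them have weights summing
to zero. These form an invariant vector `g ≤ b` of degree `d`; peel it off and continue with
`b - g`.
-/

open Finset

theorem card_finset_sym {A : Type*} [DecidableEq A] (G : Finset A) (t : ℕ) :
    #(G.sym t) = (#G).multichoose t := by
  calc #(G.sym t) = #((univ.map (Function.Embedding.subtype (· ∈ G))).sym t) := by
        rw [univ_eq_attach, attach_map_val]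
    _ = Fintype.card (Sym G t) := by rw [sym_map, card_map, sym_univ, card_univ]
    _ = (#G).multichoose t := by rw [Sym.card_sym_eq_multichoose, Fintype.card_coe]

section MultisetsWithSum

variable {A : Type*} [AddCommMonoid A]

/-- The ways of writing `b` as an unordered sum of `t` elements of `G`; its cardinality is the `N b`
of `stmt10`, that is, the paper's `|m_b^t|` in additive notation. -/
def multisetsWithSum (G : Finset A) (t : ℕ) (b : A) : Set (Multiset A) :=
  {s | Multiset.card s = t ∧ (∀ x ∈ s, x ∈ G) ∧ s.sum = b}

theorem multisetsWithSum_eq_image_sym [DecidableEq A] (G : Finset A) (t : ℕ) (b : A) :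
    multisetsWithSum G t b =
      ((↑) : Sym A t → Multiset A) ''
        ((G.sym t).filter fun u : Sym A t ↦ (u : Multiset A).sum = b) := by
  ext s
  constructor
  · rintro ⟨hcard, hG, hsum⟩
    exact ⟨⟨s, hcard⟩, by simpa [mem_sym_iff] using ⟨hG, hsum⟩, rfl⟩
  · rintro ⟨u, hu, rfl⟩
    obtain ⟨hG, hsum⟩ := mem_filter.1 hu
    exact ⟨u.2, mem_sym_iff.1 hG, hsum⟩

theorem finite_multisetsWithSum (G : Finset A) (t : ℕ) (b : A) :
    (multisetsWithSum G t b).Finite := by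
  classical
  rw [multisetsWithSum_eq_image_sym]
  exact (finite_toSet _).image _

theorem ncard_multisetsWithSum [DecidableEq A] (G : Finset A) (t : ℕ) (b : A) :
    (multisetsWithSum G t b).ncard =
      #((G.sym t).filter fun u : Sym A t ↦ (u : Multiset A).sum = b) := by
  rw [multisetsWithSum_eq_image_sym, Set.ncard_image_of_injective _ Sym.coe_injective,
    Set.ncard_coe_finset]

theorem sum_ncard_multisetsWithSum {G B : Finset A} {t : ℕ}
    (hB : ∀ s : Multiset A, Multiset.card s = t → (∀ x ∈ s, x ∈ G) → s.sum ∈ B) :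
    ∑ b ∈ B, (multisetsWithSum G t b).ncard = (#G).multichoose t := by
  classical
  simp only [ncard_multisetsWithSum, ← card_finset_sym]
  exact (card_eq_sum_card_fiberwise fun s hs ↦ hB _ s.2 (mem_sym_iff.1 hs)).symm

end MultisetsWithSum

section InvariantExponents

variable {ι M : Type*} [Fintype ι] [DecidableEq ι] [AddCommMonoid M] [DecidableEq M]

/-- The exponent vectors of the invariant monomials of degree `m`, when the `i`-th variable has
weight `α i`. For the cyclic group `Λ` of order `d`, weights live in its character group
`M = ZMod d`: then `G` and `B_t` are `invariantExponents α d` and `invariantExponents α (t * d)`. -/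
def invariantExponents (α : ι → M) (m : ℕ) : Finset (ι → ℕ) :=
  {a ∈ piAntidiag univ m | ∑ i, a i • α i = 0}

theorem mem_invariantExponents {α : ι → M} {m : ℕ} {a : ι → ℕ} :
    a ∈ invariantExponents α m ↔ ∑ i, a i = m ∧ ∑ i, a i • α i = 0 := by
  simp [invariantExponents]

theorem add_mem_invariantExponents_iff {α : ι → M} {k l : ℕ} {a b : ι → ℕ}
    (ha : a ∈ invariantExponents α k) :
    a + b ∈ invariantExponents α (k + l) ↔ b ∈ invariantExponents α l := by
  obtain ⟨hdeg, hweight⟩ := mem_invariantExponents.1 ha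
  simp [mem_invariantExponents, add_smul, sum_add_distrib, hdeg, hweight]

theorem sum_mem_invariantExponents {α : ι → M} {m : ℕ} {s : Multiset (ι → ℕ)}
    (hs : ∀ x ∈ s, x ∈ invariantExponents α m) :
    s.sum ∈ invariantExponents α (Multiset.card s * m) := by
  induction s using Multiset.induction with
  | empty => simp [mem_invariantExponents]
  | cons a s ih =>
    rw [Multiset.forall_mem_cons] at hs
    rw [Multiset.sum_cons, Multiset.card_cons, Nat.succ_mul, Nat.add_comm]
    exact (add_mem_invariantExponents_iff hs.1).2 (ih hs.2)

theorem exists_le_mem_invariantExponents {d : ℕ} (α : ι → ZMod d) {b : ι → ℕ}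
    (hb : 2 * d - 1 ≤ ∑ i, b i) : ∃ g ≤ b, g ∈ invariantExponents α d := by
  obtain ⟨u, -, hcard, hsum⟩ := ZMod.erdos_ginzburg_ziv
    (s := (univ : Finset (Σ i, Fin (b i)))) (fun x ↦ α x.1) (by simpa using hb)
  refine ⟨fun i ↦ #{x ∈ u | x.1 = i}, fun i ↦ ?_, mem_invariantExponents.2 ⟨?_, ?_⟩⟩
  · calc #{x ∈ u | x.1 = i} ≤ #{x : Σ i, Fin (b i) | x.1 = i} :=
          card_le_card (filter_subset_filter _ (subset_univ u))
      _ = Fintype.card (Fin (b i)) := by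
          rw [← Fintype.card_subtype, Fintype.card_congr (Equiv.sigmaSubtype i)]
      _ = b i := Fintype.card_fin _
  · rw [← hcard, card_eq_sum_card_fiberwise fun x _ ↦ mem_univ x.1]
  · simp only [← sum_const, sum_fiberwise', hsum]

theorem multisetsWithSum_invariantExponents_nonempty {d t : ℕ} {α : ι → ZMod d} {b : ι → ℕ}
    (hb : b ∈ invariantExponents α (t * d)) :
    (multisetsWithSum (invariantExponents α d) t b).Nonempty := by
  induction t generalizing b with
  | zero =>
    have hb0 : b = 0 := by simpa [invariantExponents] using (mem_filter.1 hb).1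
    exact ⟨0, by simp, by simp, by simp [hb0]⟩
  | succ t ih =>
    obtain rfl | ht := t.eq_zero_or_pos
    · exact ⟨{b}, by simp, by simpa using hb, by simp⟩
    have hdeg : 2 * d - 1 ≤ ∑ i, b i := by
      rw [(mem_invariantExponents.1 hb).1]
      exact (Nat.sub_le _ _).trans (Nat.mul_le_mul_right d (by lia))
    obtain ⟨g, hgb, hg⟩ := exists_le_mem_invariantExponents α hdeg
    obtain ⟨c, rfl⟩ := exists_add_of_le hgb
    rw [Nat.succ_mul, Nat.add_comm, add_mem_invariantExponents_iff hg] at hb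
    obtain ⟨s, hcard, hs, hsum⟩ := ih hb
    exact ⟨g ::ₘ s, by simp [hcard], Multiset.forall_mem_cons.2 ⟨hg, hs⟩, by simp [hsum]⟩

theorem stmt10_general {d : ℕ} (α : ι → ZMod d) (t : ℕ) :
    let G := invariantExponents α d
    let B := invariantExponents α (t * d)
    let N := fun b ↦ (multisetsWithSum G t b).ncard
    (∀ b ∈ B, 1 ≤ N b) ∧ ((#G).multichoose t : ℤ) - #B = ∑ b ∈ B, ((N b : ℤ) - 1) := by
  intro G B N
  have hcount : ∑ b ∈ B, N b = (#G).multichoose t :=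
    sum_ncard_multisetsWithSum fun s hcard hs ↦ by
      simpa only [hcard] using sum_mem_invariantExponents hs
  refine ⟨fun b hb ↦ ?_, by simp [← hcount]⟩
  exact (Set.ncard_pos (finite_multisetsWithSum G t b)).2
    (multisetsWithSum_invariantExponents_nonempty hb)

end InvariantExponents

theorem filter_dvd_antidiagonalTuple_eq_invariantExponents {k : ℕ} (d : ℕ) (α : Fin k → ℕ)
    (m : ℕ) :
    (Finset.Nat.antidiagonalTuple k m).filter (fun a ↦ d ∣ ∑ i, α i * a i) =
      invariantExponents (fun i ↦ (α i : ZMod d)) m := by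
  ext a
  simp [mem_invariantExponents, Finset.Nat.mem_antidiagonalTuple, ← ZMod.natCast_eq_zero_iff,
    mul_comm]

/-- Proposition 4.7: every Λ-invariant exponent vector of degree t·d is a sum of a
size-t multiset of degree-d invariant exponent vectors, and
binom(μ+t−1,t) − #B_t = Σ_{b ∈ B_t} (N(b) − 1). -/
theorem stmt10 (n d : ℕ) (hn : 1 ≤ n) (hd : 1 ≤ d) (α : Fin (n + 1) → ℕ)
    (t : ℕ) (ht : 1 ≤ t) :
    let G := (Finset.Nat.antidiagonalTuple (n + 1) d).filter
      (fun a => d ∣ ∑ i, α i * a i)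
    let μ := G.card
    let B := (Finset.Nat.antidiagonalTuple (n + 1) (t * d)).filter
      (fun b => d ∣ ∑ i, α i * b i)
    let N : (Fin (n + 1) → ℕ) → ℕ := fun b =>
      Set.ncard {s : Multiset (Fin (n + 1) → ℕ) |
        Multiset.card s = t ∧ (∀ x ∈ s, x ∈ G) ∧ s.sum = b}
    (∀ b ∈ B, 1 ≤ N b) ∧
      ((μ + t - 1).choose t : ℤ) - B.card = ∑ b ∈ B, ((N b : ℤ) - 1) := by
  simpa only [filter_dvd_antidiagonalTuple_eq_invariantExponents, Nat.multichoose_eq,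
    multisetsWithSum] using stmt10_general (fun i ↦ (α i : ZMod d)) t
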